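/- Let n ≥ 1 and r ≥ 1 be integers. A vector (a_1,…,a_n,b_1,…,b_n) ∈ ℤ^{2n}_{≥0} is the trailing exponent of some nonzero polynomial f ∈ A^r if and only if (a_1,b_1,…,a_n,b_n) is r-lexicographically increasing in ℤ²_{≥0}. -/

import Mathlib

/-!
Throughout, a polynomial in `x, y` is also read as a polynomial in `x` whose coefficients are
polynomials in `y` (`MvPolynomial.sumAlgEquiv`); its trailing exponent `(a, b)` then consists of
the trailing exponent `a` in `x` and the trailing exponent `b` of the coefficient `G(y)` of `x^a`.

*Necessity.* Fix `i < j`, let `τ` be the transposition `(i j)`, and put `u = x_i - x_j`,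
`v = y_i - y_j`. An alternating polynomial vanishes where the `i`-th and `j`-th points coincide, so
it lies in the ideal `(u, v)`, and an element `f` of `A^r` lies in `(u, v)^r`. Hence, whenever
`s + e = r + 1`, one can write `f = u^s H + v^e K`, and averaging over `τ` makes `H` symmetric or
antisymmetric under `τ`. Modulo `v^e` this reads `f = u^s H`; the trailing term of `u^s` is
`± x_j^s`, and the trailing exponent `d` of `H` mod `v^e` has `d_i ≤ d_j` by symmetry. So if
`v^e` does not divide `G`, then `a_i + s ≤ a_j` (`swap_gap`). Consequently
`(y_i - y_j)^(r - (a_j - a_i))` divides `G` for all `i < j` (`pow_dvd_coeff`). For fixed `j` these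
factors are pairwise coprime with trailing terms powers of `y_j`, which bounds `b_j` from below.
If `a_i = a_j`, then `G = v^r Q` with `Q` symmetric or antisymmetric under `τ`, and the same
comparison gives `b_i + r ≤ b_j`.

*Sufficiency.* A suitable `f` is a product of `r` alternants
`∑_σ sgn σ ∏_i x_i^{A_{σ i}} y_i^{B_{σ i}}`; such an alternant has trailing exponent `(A, B)` as
soon as the points `(A_i, B_i)` increase strictly for the lexicographic order
(`alternant_trailing`). The `k`-th factor, `0 ≤ k < r`, uses `A_j = ⌊(a_j + k)/r⌋`. These sum
to `a_j`, and `A_i = A_j` holds for exactly `max(r - (a_j - a_i), 0)` values of `k`, so taking for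
`B_j` the number of `i < j` with `A_i = A_j` sums to the lower bound for `b_j`. The remaining part
of `b_j` is added entirely to the factor `k` for which `⌊(a_j + k + 1)/r⌋ > ⌊(a_j + k)/r⌋`:
there every `i` with `a_i > a_j` has a strictly larger `A_i`, so strict increase is preserved.
-/
open Finset

noncomputable section

/-- The polynomial ring `ℂ[x_1,y_1,…,x_n,y_n]`: `Sum.inl i ↦ x_i`, `Sum.inr i ↦ y_i`. -/
abbrev PolyRing (n : ℕ) := MvPolynomial (Fin n ⊕ Fin n) ℂ

/-- `f` is alternating for the `S_n`-action `σ·x_i = x_{σ(i)}`, `σ·y_i = y_{σ(i)}`. -/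
def IsAlternating (n : ℕ) (f : PolyRing n) : Prop :=
  ∀ σ : Equiv.Perm (Fin n),
    MvPolynomial.rename (Equiv.sumCongr σ σ) f = ((Equiv.Perm.sign σ : ℤ) : ℂ) • f

/-- `A^r`: the ℂ-linear span of products of `r` alternating polynomials. -/
def Ar (n r : ℕ) : Submodule ℂ (PolyRing n) :=
  Submodule.span ℂ
    {f | ∃ g : Fin r → PolyRing n, (∀ m, IsAlternating n (g m)) ∧ f = ∏ m, g m}

/-- The position of a variable in the order `x_1 > ⋯ > x_n > y_1 > ⋯ > y_n`. -/
def varIdx (n : ℕ) : Fin n ⊕ Fin n → ℕ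
  | Sum.inl i => (i : ℕ)
  | Sum.inr i => n + (i : ℕ)

/-- Strict lexicographic order on monomial exponents with respect to the variable
order `x_1 > ⋯ > x_n > y_1 > ⋯ > y_n`. -/
def MonLT (n : ℕ) (d e : (Fin n ⊕ Fin n) →₀ ℕ) : Prop :=
  ∃ v, d v < e v ∧ ∀ w, varIdx n w < varIdx n v → d w = e w

/-- `d` is the trailing (lex-smallest) exponent of the nonzero polynomial `f`. -/
def IsTrailingExp (n : ℕ) (f : PolyRing n) (d : (Fin n ⊕ Fin n) →₀ ℕ) : Prop :=
  f ≠ 0 ∧ d ∈ f.support ∧ ∀ e ∈ f.support, e ≠ d → MonLT n d e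

/-- An `r`-lexicographically increasing `n`-tuple of integer points in `ℤ²_{≥0}`. -/
def RLexNN (n : ℕ) (r : ℤ) (a b : Fin n → ℤ) : Prop :=
  (∀ h : 0 < n, 0 ≤ a ⟨0, h⟩) ∧ Monotone a ∧
  (∀ i : Fin n, ∀ h : (i : ℕ) + 1 < n,
      a i = a ⟨(i : ℕ) + 1, h⟩ → b i + r ≤ b ⟨(i : ℕ) + 1, h⟩) ∧
  (∀ j : Fin n, (∑ i ∈ univ.filter (fun i => i < j), max (r - (a j - a i)) 0) ≤ b j)

/-! ### Trailing exponents for an additive ordering of the monomials -/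

section Trailing

variable {σ Γ S : Type*} [AddCommMonoid Γ] [LinearOrder Γ] [CommRing S]

/-- All monomials of `f` have key at least that of `d`, where the monomials are compared through an
additive map `κ` to an ordered monoid. Together with `f.coeff d ≠ 0` and injectivity of `κ` it says
that `d` is the trailing exponent of `f`. -/
def VanishBelow (κ : (σ →₀ ℕ) →+ Γ) (f : MvPolynomial σ S) (d : σ →₀ ℕ) : Prop :=
  ∀ e, κ e < κ d → f.coeff e = 0

variable {κ : (σ →₀ ℕ) →+ Γ}

theorem eq_of_vanishBelow (hκ : Function.Injective κ) {f : MvPolynomial σ S} {d e : σ →₀ ℕ}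
    (hd : VanishBelow κ f d) (hd0 : f.coeff d ≠ 0) (he : VanishBelow κ f e)
    (he0 : f.coeff e ≠ 0) : d = e := by
  refine hκ (le_antisymm ?_ ?_)
  · exact not_lt.1 fun h => he0 (hd _ h)
  · exact not_lt.1 fun h => hd0 (he _ h)

theorem exists_trailing (κ : (σ →₀ ℕ) →+ Γ) {f : MvPolynomial σ S} (hf : f ≠ 0) :
    ∃ d, f.coeff d ≠ 0 ∧ VanishBelow κ f d := by
  obtain ⟨d, hd, hmin⟩ := f.support.exists_min_image κ (MvPolynomial.support_nonempty.2 hf)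
  refine ⟨d, MvPolynomial.mem_support_iff.1 hd, fun e he => ?_⟩
  by_contra h
  exact absurd (hmin e (MvPolynomial.mem_support_iff.2 h)) (not_le.2 he)

variable [IsOrderedCancelAddMonoid Γ]

theorem VanishBelow.mul {f g : MvPolynomial σ S} {d e : σ →₀ ℕ}
    (hf : VanishBelow κ f d) (hg : VanishBelow κ g e) : VanishBelow κ (f * g) (d + e) := by
  classical
  intro c hc
  rw [MvPolynomial.coeff_mul]
  refine Finset.sum_eq_zero fun p hp => ?_
  rw [HasAntidiagonal.mem_antidiagonal] at hp
  rw [← hp, map_add, map_add] at hc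
  rcases lt_or_ge (κ p.1) (κ d) with h | h
  · rw [hf _ h, zero_mul]
  · rw [hg p.2 (lt_of_add_lt_add_left (lt_of_le_of_lt (add_le_add_left h _) hc)), mul_zero]

theorem VanishBelow.coeff_mul (hκ : Function.Injective κ) {f g : MvPolynomial σ S}
    {d e : σ →₀ ℕ} (hf : VanishBelow κ f d) (hg : VanishBelow κ g e) :
    (f * g).coeff (d + e) = f.coeff d * g.coeff e := by
  classical
  rw [MvPolynomial.coeff_mul]
  refine Finset.sum_eq_single (d, e) (fun p hp hne => ?_) (fun h => ?_)
  · rw [HasAntidiagonal.mem_antidiagonal] at hp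
    have hk : κ p.1 + κ p.2 = κ d + κ e := by rw [← map_add, hp, map_add]
    rcases lt_trichotomy (κ p.1) (κ d) with h | h | h
    · rw [hf _ h, zero_mul]
    · refine absurd (Prod.ext (hκ h) (hκ ?_)) hne
      rw [h] at hk
      exact add_left_cancel hk
    · rw [hg p.2, mul_zero]
      by_contra h2
      exact absurd hk (ne_of_gt (add_lt_add_of_lt_of_le h (not_lt.1 h2)))
  · exact absurd (by simp) h

theorem VanishBelow.prod (hκ : Function.Injective κ) {ι : Type*} (s : Finset ι)
    (f : ι → MvPolynomial σ S) (d : ι → σ →₀ ℕ) (h : ∀ k ∈ s, VanishBelow κ (f k) (d k))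
    (h0 : ∀ e : σ →₀ ℕ, 0 ≤ κ e) :
    VanishBelow κ (∏ k ∈ s, f k) (∑ k ∈ s, d k) ∧
      (∏ k ∈ s, f k).coeff (∑ k ∈ s, d k) = ∏ k ∈ s, (f k).coeff (d k) := by
  classical
  induction s using Finset.induction_on with
  | empty =>
    refine ⟨fun e he => ?_, by simp⟩
    rw [sum_empty, map_zero] at he
    exact absurd (h0 e) (not_le.2 he)
  | insert k s hk ih =>
    obtain ⟨h1, h2⟩ := ih fun m hm => h m (mem_insert_of_mem hm)
    have h3 := h k (mem_insert_self _ _)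
    rw [prod_insert hk, sum_insert hk, prod_insert hk, ← h2]
    exact ⟨h3.mul h1, h3.coeff_mul hκ h1⟩

end Trailing

/-! ### The lexicographic orders -/

section LexOrder

variable {n : ℕ} {S : Type*} [CommRing S]

/-- The lexicographic order on exponents in `n` variables, the first variable being the largest. -/
def lexKey (n : ℕ) : (Fin n →₀ ℕ) →+ Lex (Fin n →₀ ℕ) :=
  (toLexAddEquiv (Fin n →₀ ℕ)).toAddMonoidHom

theorem lexKey_injective : Function.Injective (lexKey n) := (toLexAddEquiv _).injective

theorem lexKey_lt {d e : Fin n →₀ ℕ} :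
    lexKey n d < lexKey n e ↔ ∃ i, (∀ j < i, d j = e j) ∧ d i < e i := Iff.rfl

theorem lexKey_nonneg (d : Fin n →₀ ℕ) : 0 ≤ lexKey n d := by
  by_contra h
  rw [not_le, ← map_zero (lexKey n), lexKey_lt] at h
  obtain ⟨i, -, hi⟩ := h
  simp at hi

theorem vanishBelow_X_sub_X {i j : Fin n} (hij : i < j) :
    VanishBelow (lexKey n) (MvPolynomial.X i - MvPolynomial.X j : MvPolynomial (Fin n) S)
      (Finsupp.single j 1) ∧
    (MvPolynomial.X i - MvPolynomial.X j : MvPolynomial (Fin n) S).coeff (Finsupp.single j 1)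
      = -1 := by
  classical
  constructor
  · intro e he
    rw [MvPolynomial.coeff_sub, MvPolynomial.coeff_X, MvPolynomial.coeff_X, if_neg, if_neg,
      sub_zero]
    · rintro rfl; exact lt_irrefl _ he
    · rintro rfl
      exact absurd he (not_lt.2 (Finsupp.Lex.single_le_iff.2 hij.le))
  · rw [MvPolynomial.coeff_sub, MvPolynomial.coeff_X, MvPolynomial.coeff_X, if_neg, if_pos rfl,
      zero_sub]
    simp [Finsupp.single_left_inj, hij.ne]

theorem vanishBelow_X_sub_X_pow {i j : Fin n} (hij : i < j) (s : ℕ) :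
    VanishBelow (lexKey n) ((MvPolynomial.X i - MvPolynomial.X j) ^ s : MvPolynomial (Fin n) S)
      (Finsupp.single j s) ∧
    ((MvPolynomial.X i - MvPolynomial.X j) ^ s : MvPolynomial (Fin n) S).coeff
      (Finsupp.single j s) = (-1) ^ s := by
  have h := VanishBelow.prod (S := S) (lexKey_injective (n := n)) (range s)
    (fun _ => MvPolynomial.X i - MvPolynomial.X j) (fun _ => Finsupp.single j 1)
    (fun _ _ => (vanishBelow_X_sub_X hij).1) lexKey_nonneg
  simp only [prod_const, sum_const, card_range, (vanishBelow_X_sub_X (S := S) hij).2,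
    Finsupp.smul_single, smul_eq_mul, mul_one] at h
  exact h

/-- If the support of `H` is stable under exchanging the variables `i < j`, then the trailing
exponent `a` of `(X i - X j) ^ s * H` satisfies `a i + s ≤ a j`. The coefficient ring may have zero
divisors: the trailing coefficient of `(X i - X j) ^ s` is `±1`. -/
theorem swap_gap {i j : Fin n} (hij : i < j) (s : ℕ) {H : MvPolynomial (Fin n) S}
    (hsym : ∀ c, H.coeff c = 0 → H.coeff (c.mapDomain (Equiv.swap i j)) = 0) {a : Fin n →₀ ℕ}
    (ha : VanishBelow (lexKey n) ((MvPolynomial.X i - MvPolynomial.X j) ^ s * H) a)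
    (ha0 : ((MvPolynomial.X i - MvPolynomial.X j) ^ s * H).coeff a ≠ 0) :
    a i + s ≤ a j := by
  have hH : H ≠ 0 := by
    rintro rfl
    simp at ha0
  obtain ⟨d, hd0, hd⟩ := exists_trailing (lexKey n) hH
  obtain ⟨h1, h2⟩ := vanishBelow_X_sub_X_pow (S := S) hij s
  have had : a = Finsupp.single j s + d := by
    refine eq_of_vanishBelow lexKey_injective ha ha0 (h1.mul hd) ?_
    rw [h1.coeff_mul lexKey_injective hd, h2]
    intro h
    apply hd0
    rcases neg_one_pow_eq_or S s with h' | h' <;> simpa [h'] using h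
  have hle : d i ≤ d j := by
    by_contra! hlt
    have key : ∀ k, d.mapDomain (Equiv.swap i j) k = d (Equiv.swap i j k) := fun k => by
      rw [Finsupp.mapDomain_equiv_apply, Equiv.symm_swap]
    apply hd0
    have h3 := hsym _ (hd (d.mapDomain (Equiv.swap i j)) (lexKey_lt.2 ⟨i, fun k hk => ?_, ?_⟩))
    · rw [← Finsupp.mapDomain_comp, ← Equiv.coe_trans, Equiv.swap_swap] at h3
      simpa using h3
    · rw [key, Equiv.swap_apply_of_ne_of_ne hk.ne (hk.trans hij).ne]
    · rwa [key, Equiv.swap_apply_left]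
  rw [had]
  simp [hij.ne]
  omega

/-- The lexicographic order on exponents in `x, y`: first compare the exponents of `x`, then those
of `y`. -/
def pairKey (n : ℕ) : (Fin n ⊕ Fin n →₀ ℕ) →+ Lex (Fin n →₀ ℕ) ×ₗ Lex (Fin n →₀ ℕ) :=
  (toLexAddEquiv _).toAddMonoidHom.comp
    (((lexKey n).prodMap (lexKey n)).comp
      (Finsupp.sumFinsuppAddEquivProdFinsupp (M := ℕ)).toAddMonoidHom)

theorem pairKey_injective : Function.Injective (pairKey n) := by
  refine (toLexAddEquiv _).injective.comp (Function.Injective.comp ?_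
    (Finsupp.sumFinsuppAddEquivProdFinsupp (M := ℕ)).injective)
  exact Function.Injective.prodMap lexKey_injective lexKey_injective

theorem pairKey_lt {d e : Fin n ⊕ Fin n →₀ ℕ} : pairKey n d < pairKey n e ↔
    (lexKey n (Finsupp.sumFinsuppAddEquivProdFinsupp d).1
        < lexKey n (Finsupp.sumFinsuppAddEquivProdFinsupp e).1) ∨
    ((Finsupp.sumFinsuppAddEquivProdFinsupp d).1 = (Finsupp.sumFinsuppAddEquivProdFinsupp e).1 ∧
      lexKey n (Finsupp.sumFinsuppAddEquivProdFinsupp d).2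
        < lexKey n (Finsupp.sumFinsuppAddEquivProdFinsupp e).2) := by
  rw [Prod.Lex.lt_iff]
  refine or_congr Iff.rfl (and_congr ?_ Iff.rfl)
  exact lexKey_injective.eq_iff

theorem pairKey_nonneg (d : Fin n ⊕ Fin n →₀ ℕ) : 0 ≤ pairKey n d := by
  by_contra h
  rw [not_le, ← map_zero (pairKey n), pairKey_lt] at h
  simp only [map_zero, Prod.fst_zero, Prod.snd_zero] at h
  rcases h with h | h
  · exact absurd h (not_lt.2 (lexKey_nonneg _))
  · exact absurd h.2 (not_lt.2 (lexKey_nonneg _))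

theorem coeff_coeff_sumAlgEquiv (f : MvPolynomial (Fin n ⊕ Fin n) ℂ) (a b : Fin n →₀ ℕ) :
    ((MvPolynomial.sumAlgEquiv ℂ (Fin n) (Fin n) f).coeff a).coeff b
      = f.coeff (Finsupp.sumFinsuppAddEquivProdFinsupp.symm (a, b)) := by
  simp [MvPolynomial.sumAlgEquiv, MvPolynomial.coeff, AddMonoidAlgebra.curryAlgEquiv,
    AddMonoidAlgebra.curryRingEquiv, AddMonoidAlgebra.curryAddEquiv]

end LexOrder

/-! ### Trailing exponents of elements of `A^r` are `r`-lexicographically increasing -/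

section Necessity

variable {n r : ℕ}

theorem rename_of_mem_Ar {f : PolyRing n} (hf : f ∈ Ar n r) (σ : Equiv.Perm (Fin n)) :
    MvPolynomial.rename (Equiv.sumCongr σ σ) f = (((Equiv.Perm.sign σ : ℤ) : ℂ) ^ r) • f := by
  unfold Ar at hf
  induction hf using Submodule.span_induction with
  | mem x hx =>
    obtain ⟨g, hg, rfl⟩ := hx
    rw [map_prod, Finset.prod_congr rfl fun m _ => hg m σ, Finset.prod_smul]
    simp
  | zero => simp
  | add x y _ _ hx hy => rw [map_add, hx, hy, smul_add]
  | smul c x _ hx => rw [map_smul, hx, smul_comm]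

/-- An alternating polynomial lies in the ideal `(x_i - x_j, y_i - y_j)`, since it vanishes after
the `i`-th and `j`-th points are identified. -/
theorem IsAlternating.exists_pair {g : PolyRing n} (hg : IsAlternating n g) {i j : Fin n}
    (hij : i ≠ j) :
    ∃ p q, g = (MvPolynomial.X (Sum.inl i) - MvPolynomial.X (Sum.inl j)) * p
      + (MvPolynomial.X (Sum.inr i) - MvPolynomial.X (Sum.inr j)) * q := by
  set u : PolyRing n := MvPolynomial.X (Sum.inl i) - MvPolynomial.X (Sum.inl j) with hu
  set v : PolyRing n := MvPolynomial.X (Sum.inr i) - MvPolynomial.X (Sum.inr j) with hv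
  -- `φ` identifies the `i`-th and the `j`-th point.
  let ρ : Fin n → Fin n := Function.update id i j
  let φ : PolyRing n →ₐ[ℂ] PolyRing n := MvPolynomial.rename (Sum.map ρ ρ)
  have hρ : ρ ∘ Equiv.swap i j = ρ := by
    funext k
    simp only [ρ, Function.comp]
    rcases eq_or_ne k i with rfl | hki
    · simp [hij.symm]
    rcases eq_or_ne k j with rfl | hkj
    · simp [hki]
    · rw [Equiv.swap_apply_of_ne_of_ne hki hkj]
  have hφ : φ g = 0 := by
    have h1 := congrArg φ (hg (Equiv.swap i j))
    rw [map_smul, Equiv.Perm.sign_swap hij] at h1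
    simp only [φ, MvPolynomial.rename_rename] at h1
    rw [show ⇑(Equiv.sumCongr (Equiv.swap i j) (Equiv.swap i j))
        = Sum.map (Equiv.swap i j) (Equiv.swap i j) from rfl, Sum.map_comp_map, hρ] at h1
    simp only [Units.val_neg, Units.val_one, Int.cast_neg, Int.cast_one, neg_smul, one_smul] at h1
    exact self_eq_neg.1 h1
  let π := Ideal.Quotient.mkₐ ℂ (Ideal.span {u, v})
  have hπ : π.comp φ = π := by
    have key : ∀ w, π (φ (MvPolynomial.X w)) = π (MvPolynomial.X w) := by
      intro w
      refine Eq.symm ((Ideal.Quotient.mk_eq_mk_iff_sub_mem _ _).2 ?_)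
      simp only [φ, MvPolynomial.rename_X, ρ]
      rcases w with k | k <;> rcases eq_or_ne k i with rfl | hki
      · simpa using Ideal.subset_span (by simp [hu])
      · simp [hki]
      · simpa using Ideal.subset_span (by simp [hv])
      · simp [hki]
    exact MvPolynomial.algHom_ext fun w => key w
  have hmem : g ∈ Ideal.span {u, v} := by
    refine Ideal.Quotient.eq_zero_iff_mem.1 ?_
    have h2 := DFunLike.congr_fun hπ g
    simp only [AlgHom.comp_apply, hφ, map_zero] at h2
    exact h2.symm
  obtain ⟨p, q, h⟩ := Ideal.mem_span_pair.1 hmem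
  exact ⟨p, q, by rw [← h]; ring⟩

/-- Each `(x_i - x_j)^k (y_i - y_j)^(r-k)` is divisible by one of the powers, because either
`s ≤ k` or `e ≤ r - k`. -/
theorem exists_decomp_of_mem_Ar {f : PolyRing n} (hf : f ∈ Ar n r) {i j : Fin n}
    (hij : i ≠ j) {s e : ℕ} (hse : s + e = r + 1) :
    ∃ H K, f = (MvPolynomial.X (Sum.inl i) - MvPolynomial.X (Sum.inl j)) ^ s * H
      + (MvPolynomial.X (Sum.inr i) - MvPolynomial.X (Sum.inr j)) ^ e * K := by
  set u : PolyRing n := MvPolynomial.X (Sum.inl i) - MvPolynomial.X (Sum.inl j)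
  set v : PolyRing n := MvPolynomial.X (Sum.inr i) - MvPolynomial.X (Sum.inr j)
  suffices h : f ∈ (Ideal.span {u ^ s, v ^ e} : Ideal (PolyRing n)) by
    obtain ⟨p, q, h⟩ := Ideal.mem_span_pair.1 h
    exact ⟨p, q, by rw [← h]; ring⟩
  have hus : u ^ s ∈ (Ideal.span {u ^ s, v ^ e} : Ideal (PolyRing n)) :=
    Ideal.subset_span (by simp)
  have hve : v ^ e ∈ (Ideal.span {u ^ s, v ^ e} : Ideal (PolyRing n)) :=
    Ideal.subset_span (by simp)
  unfold Ar at hf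
  induction hf using Submodule.span_induction with
  | mem x hx =>
    obtain ⟨g, hg, rfl⟩ := hx
    choose p q hpq using fun m => (hg m).exists_pair hij
    rw [Finset.prod_congr rfl fun m _ => hpq m, Finset.prod_add]
    refine Ideal.sum_mem _ fun t _ => ?_
    rw [Finset.prod_mul_distrib, Finset.prod_mul_distrib, Finset.prod_const, Finset.prod_const]
    have hcard : t.card + (univ \ t).card = r := by
      rw [← Finset.compl_eq_univ_sdiff, Finset.card_add_card_compl, Fintype.card_fin]
    rcases le_or_gt s t.card with h | h
    · exact Ideal.mul_mem_right _ _ (Ideal.mul_mem_right _ _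
        (Ideal.mem_of_dvd _ (pow_dvd_pow u h) hus))
    · exact Ideal.mul_mem_left _ _ (Ideal.mul_mem_right _ _
        (Ideal.mem_of_dvd _ (pow_dvd_pow v (by omega)) hve))
  | zero => exact Ideal.zero_mem _
  | add x y _ _ hx hy => exact Ideal.add_mem _ hx hy
  | smul c x _ hx =>
    rw [MvPolynomial.smul_eq_C_mul]
    exact Ideal.mul_mem_left _ _ hx

/-- The decomposition of `exists_decomp_of_mem_Ar`, averaged over the transposition `(i j)`, which
acts on `f` by `(-1)^r` and on `(x_i - x_j)^s` by `(-1)^s`. -/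
theorem exists_symm_decomp_of_mem_Ar {f : PolyRing n} (hf : f ∈ Ar n r) {i j : Fin n}
    (hij : i ≠ j) {s e : ℕ} (hse : s + e = r + 1) :
    ∃ H K, f = (MvPolynomial.X (Sum.inl i) - MvPolynomial.X (Sum.inl j)) ^ s * H
      + (MvPolynomial.X (Sum.inr i) - MvPolynomial.X (Sum.inr j)) ^ e * K ∧
      MvPolynomial.rename (Equiv.sumCongr (Equiv.swap i j) (Equiv.swap i j)) H
        = ((-1 : ℂ) ^ (r + s)) • H := by
  obtain ⟨H, K, hHK⟩ := exists_decomp_of_mem_Ar hf hij hse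
  have hτ := rename_of_mem_Ar hf (Equiv.swap i j)
  set u : PolyRing n := MvPolynomial.X (Sum.inl i) - MvPolynomial.X (Sum.inl j) with hu
  set v : PolyRing n := MvPolynomial.X (Sum.inr i) - MvPolynomial.X (Sum.inr j) with hv
  set τ : PolyRing n →ₐ[ℂ] PolyRing n :=
    MvPolynomial.rename (Equiv.sumCongr (Equiv.swap i j) (Equiv.swap i j)) with hτdef
  have hττ : ∀ h, τ (τ h) = h := by
    intro h
    rw [hτdef, MvPolynomial.rename_rename, ← Equiv.coe_trans, Equiv.sumCongr_trans,
      Equiv.swap_swap, Equiv.sumCongr_refl]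
    exact MvPolynomial.rename_id_apply h
  have hτu : τ u = -u := by simp [hτdef, hu]
  have hτv : τ v = -v := by simp [hτdef, hv]
  have hsq : ∀ m : ℕ, ((-1 : ℂ) ^ m) * (-1) ^ m = 1 := fun m => by
    rw [← mul_pow]; simp
  refine ⟨(1 / 2 : ℂ) • (H + ((-1 : ℂ) ^ (r + s)) • τ H),
    (1 / 2 : ℂ) • (K + ((-1 : ℂ) ^ (r + e)) • τ K), ?_, ?_⟩
  · have h1 : f = ((-1 : ℂ) ^ r) • τ f := by
      rw [hτ, Equiv.Perm.sign_swap hij, smul_smul]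
      simp [hsq]
    have h2 : f = (1 / 2 : ℂ) • (f + ((-1 : ℂ) ^ r) • τ f) := by
      rw [← h1, ← two_smul ℂ f, smul_smul]; norm_num
    have h3 : τ f = ((-1 : ℂ) ^ s) • (u ^ s * τ H) + ((-1 : ℂ) ^ e) • (v ^ e * τ K) := by
      rw [hHK, map_add, map_mul, map_mul, map_pow, map_pow, hτu, hτv, neg_pow u, neg_pow v]
      simp only [MvPolynomial.smul_eq_C_mul, map_pow, map_neg, map_one]
      ring
    rw [h2, h3]
    nth_rewrite 1 [hHK]
    simp only [MvPolynomial.smul_eq_C_mul, map_pow, map_neg, map_one]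
    ring
  · rw [map_smul, map_add, map_smul, hττ, smul_comm ((-1 : ℂ) ^ (r + s)) (1 / 2 : ℂ),
      smul_add ((-1 : ℂ) ^ (r + s)), smul_smul ((-1 : ℂ) ^ (r + s)), hsq, one_smul,
      add_comm (τ H)]

theorem sumAlgEquiv_rename (σ : Equiv.Perm (Fin n)) (f : PolyRing n) :
    MvPolynomial.sumAlgEquiv ℂ (Fin n) (Fin n) (MvPolynomial.rename (Equiv.sumCongr σ σ) f)
      = MvPolynomial.map (MvPolynomial.rename σ : MvPolynomial (Fin n) ℂ →ₐ[ℂ] _).toRingHom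
        (MvPolynomial.rename σ (MvPolynomial.sumAlgEquiv ℂ (Fin n) (Fin n) f)) := by
  induction f using MvPolynomial.induction_on with
  | C c => simp
  | add p q hp hq => simp only [map_add, hp, hq]
  | mul_X p w hp =>
    rw [map_mul, map_mul, hp, map_mul, map_mul, map_mul]
    rcases w with k | k <;> simp

/-- If `σ` acts on `f` by a scalar, the coefficients of `f` (as a polynomial in `x`) at permuted
exponents are obtained from one another by permuting the variables `y`. -/
theorem coeff_mapDomain_sumAlgEquiv {f : PolyRing n} {σ : Equiv.Perm (Fin n)} {c : ℂ}
    (hf : MvPolynomial.rename (Equiv.sumCongr σ σ) f = c • f) (d : Fin n →₀ ℕ) :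
    c • (MvPolynomial.sumAlgEquiv ℂ (Fin n) (Fin n) f).coeff (d.mapDomain σ)
      = MvPolynomial.rename σ ((MvPolynomial.sumAlgEquiv ℂ (Fin n) (Fin n) f).coeff d) := by
  have h := congrArg (MvPolynomial.coeff (d.mapDomain σ)) (sumAlgEquiv_rename σ f)
  rw [hf, map_smul, MvPolynomial.coeff_smul, MvPolynomial.coeff_map,
    MvPolynomial.coeff_rename_mapDomain _ σ.injective] at h
  exact h

/-- Divisibility of the trailing `x`-coefficient of `f` by a power of `y_i - y_j`, obtained by
applying `swap_gap` over the coefficient ring `ℂ[y] / (y_i - y_j)^e`. -/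
theorem pow_dvd_coeff {f : PolyRing n} (hf : f ∈ Ar n r) {i j : Fin n} (hij : i < j)
    {s e : ℕ} (hse : s + e = r + 1) {a : Fin n →₀ ℕ}
    (ha : VanishBelow (lexKey n) (MvPolynomial.sumAlgEquiv ℂ (Fin n) (Fin n) f) a)
    (has : a j < a i + s) :
    (MvPolynomial.X i - MvPolynomial.X j) ^ e
      ∣ (MvPolynomial.sumAlgEquiv ℂ (Fin n) (Fin n) f).coeff a := by
  obtain ⟨H, K, hHK, hH⟩ := exists_symm_decomp_of_mem_Ar hf hij.ne hse
  set Φ := MvPolynomial.sumAlgEquiv ℂ (Fin n) (Fin n)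
  set v : MvPolynomial (Fin n) ℂ := MvPolynomial.X i - MvPolynomial.X j with hv
  let π := Ideal.Quotient.mk (Ideal.span {v ^ e})
  have hπ : ∀ z, π z = 0 ↔ v ^ e ∣ z := fun z => by
    rw [Ideal.Quotient.eq_zero_iff_mem, Ideal.mem_span_singleton]
  have hF : MvPolynomial.map π (Φ f)
      = (MvPolynomial.X i - MvPolynomial.X j) ^ s * MvPolynomial.map π (Φ H) := by
    have h0 : Φ f = (MvPolynomial.X i - MvPolynomial.X j) ^ s * Φ H
        + MvPolynomial.C (v ^ e) * Φ K := by
      rw [hHK]; simp [Φ, hv]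
    rw [h0, map_add, map_mul, map_mul, MvPolynomial.map_C, (hπ _).2 dvd_rfl]
    simp
  by_contra hG
  refine absurd (swap_gap hij s (H := MvPolynomial.map π (Φ H)) (fun c hc => ?_) (a := a) ?_ ?_)
    (not_le.2 has)
  · rw [MvPolynomial.coeff_map, hπ] at hc ⊢
    have h1 := coeff_mapDomain_sumAlgEquiv hH c
    have h2 : v ^ e ∣ MvPolynomial.rename (Equiv.swap i j) ((Φ H).coeff c) := by
      refine dvd_trans ?_ (map_dvd (MvPolynomial.rename (Equiv.swap i j)) hc)
      have h3 : MvPolynomial.rename (Equiv.swap i j) v = -v := by simp [hv]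
      rw [map_pow, h3, neg_pow]
      exact dvd_mul_left _ _
    rw [← h1, MvPolynomial.smul_eq_C_mul] at h2
    refine (IsUnit.dvd_mul_left ?_).1 h2
    exact (IsUnit.mk0 _ (pow_ne_zero _ (by norm_num))).map MvPolynomial.C
  · rw [← hF]
    intro c hc
    rw [MvPolynomial.coeff_map, ha c hc, map_zero]
  · rw [← hF, MvPolynomial.coeff_map]
    exact fun h => hG ((hπ _).1 h)

theorem irreducible_X_sub_X {i j : Fin n} (hij : i ≠ j) :
    Irreducible (MvPolynomial.X i - MvPolynomial.X j : MvPolynomial (Fin n) ℂ) := by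
  have h := MvPolynomial.irreducible_mul_X_add (1 : MvPolynomial (Fin n) ℂ)
    (-MvPolynomial.X j) i one_ne_zero (by simp) (by
      rw [MvPolynomial.vars_neg, MvPolynomial.vars_X]; simpa using hij) isRelPrime_one_left
  simpa [sub_eq_add_neg] using h

theorem isRelPrime_X_sub_X {i k j : Fin n} (hij : i ≠ j) (hkj : k ≠ j) (hik : i ≠ k) :
    IsRelPrime (MvPolynomial.X i - MvPolynomial.X j : MvPolynomial (Fin n) ℂ)
      (MvPolynomial.X k - MvPolynomial.X j) := by
  rw [(irreducible_X_sub_X hij).isRelPrime_iff_not_dvd]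
  intro h
  have h2 := map_dvd (MvPolynomial.eval (Pi.single k (1 : ℂ))) h
  simp [hik, hkj.symm] at h2

/-- The three conditions on a trailing exponent `(a, b)`. The truncated subtraction
`r - (a j - a i)` agrees with `max (r - (a j - a i)) 0` because `a` is monotone. -/
theorem necessity {f : PolyRing n} (hf : f ∈ Ar n r) {a b : Fin n →₀ ℕ}
    (ha : VanishBelow (lexKey n) (MvPolynomial.sumAlgEquiv ℂ (Fin n) (Fin n) f) a)
    (hb : VanishBelow (lexKey n) ((MvPolynomial.sumAlgEquiv ℂ (Fin n) (Fin n) f).coeff a) b)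
    (hb0 : ((MvPolynomial.sumAlgEquiv ℂ (Fin n) (Fin n) f).coeff a).coeff b ≠ 0) :
    (∀ i j, i < j → a i ≤ a j) ∧ (∀ i j, i < j → a i = a j → b i + r ≤ b j) ∧
    (∀ j, ∑ i ∈ univ.filter (fun i => i < j), (r - (a j - a i)) ≤ b j) := by
  have hsymm := fun i j : Fin n => rename_of_mem_Ar hf (Equiv.swap i j)
  set F := MvPolynomial.sumAlgEquiv ℂ (Fin n) (Fin n) f with hF
  have hG0 : F.coeff a ≠ 0 := by
    intro h; simp [h] at hb0
  have hc0 : ∀ i j : Fin n, (((Equiv.Perm.sign (Equiv.swap i j) : ℤ) : ℂ) ^ r) ≠ 0 := by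
    intro i j
    exact pow_ne_zero _ (by simp)
  have hmono : ∀ i j, i < j → a i ≤ a j := by
    intro i j hij
    have h := swap_gap hij 0 (H := F) (a := a) (fun c hc => ?_) (by simpa using ha)
      (by simpa using hG0)
    · simpa using h
    · have h1 := coeff_mapDomain_sumAlgEquiv (hsymm i j) c
      rw [← hF, hc, map_zero] at h1
      exact (smul_eq_zero.1 h1).resolve_left (hc0 i j)
  have hdvd : ∀ i j, i < j →
      (MvPolynomial.X i - MvPolynomial.X j) ^ (r - (a j - a i)) ∣ F.coeff a := by
    intro i j hij
    rcases Nat.eq_zero_or_pos (r - (a j - a i)) with h | h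
    · rw [h, pow_zero]; exact one_dvd _
    · have := hmono i j hij
      exact pow_dvd_coeff hf hij (s := a j - a i + 1) (by omega) ha (by omega)
  refine ⟨hmono, fun i j hij haij => ?_, fun j => ?_⟩
  · obtain ⟨Q, hQ⟩ := hdvd i j hij
    rw [haij, Nat.sub_self, Nat.sub_zero] at hQ
    have hτ := coeff_mapDomain_sumAlgEquiv (hsymm i j) a
    have hswap : a.mapDomain (Equiv.swap i j) = a := by
      ext k
      rw [Finsupp.mapDomain_equiv_apply, Equiv.symm_swap, Equiv.swap_apply_def]
      split_ifs with h1 h2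
      · rw [h1, haij]
      · rw [h2, haij]
      · rfl
    rw [← hF, hswap, hQ, map_mul, map_pow] at hτ
    set v : MvPolynomial (Fin n) ℂ := MvPolynomial.X i - MvPolynomial.X j with hv
    have h3 : MvPolynomial.rename (Equiv.swap i j) v = -v := by simp [hv]
    have hv0 : v ^ r ≠ 0 := pow_ne_zero _ (irreducible_X_sub_X hij.ne).ne_zero
    obtain ⟨c, hc, hQτ⟩ : ∃ c : ℂ, c ≠ 0 ∧ c • Q = MvPolynomial.rename (Equiv.swap i j) Q := by
      refine ⟨(-1) ^ r * ((Equiv.Perm.sign (Equiv.swap i j) : ℤ) : ℂ) ^ r,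
        mul_ne_zero (pow_ne_zero _ (by norm_num)) (hc0 i j), mul_left_cancel₀ hv0 ?_⟩
      rw [h3, neg_pow, mul_assoc] at hτ
      have h4 : ((-1 : MvPolynomial (Fin n) ℂ) ^ r) * (-1) ^ r = 1 := by
        rw [← mul_pow]; simp
      rw [mul_smul, mul_smul_comm, mul_smul_comm, hτ, MvPolynomial.smul_eq_C_mul, ← mul_assoc]
      simp [h4]
    refine swap_gap hij r (H := Q) (a := b) (fun d hd => ?_) (hQ ▸ hb) (hQ ▸ hb0)
    have h5 := congrArg (MvPolynomial.coeff (d.mapDomain (Equiv.swap i j))) hQτ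
    rw [MvPolynomial.coeff_rename_mapDomain _ (Equiv.swap i j).injective, hd,
      MvPolynomial.coeff_smul] at h5
    exact (smul_eq_zero.1 h5).resolve_left hc
  · have hprod : ∏ i ∈ univ.filter (fun i => i < j),
        (MvPolynomial.X i - MvPolynomial.X j) ^ (r - (a j - a i)) ∣ F.coeff a := by
      refine Finset.prod_dvd_of_isRelPrime (fun i hi k hk hik => ?_)
        (fun i hi => hdvd i j (by simpa using hi))
      have hi' : i < j := by simpa using hi
      have hk' : k < j := by simpa using hk
      exact (isRelPrime_X_sub_X hi'.ne hk'.ne hik).pow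
    obtain ⟨Q, hQ⟩ := hprod
    have hQ0 : Q ≠ 0 := by
      rintro rfl
      rw [mul_zero] at hQ
      exact hG0 hQ
    obtain ⟨d, hd0, hd⟩ := exists_trailing (lexKey n) hQ0
    obtain ⟨h1, h2⟩ := VanishBelow.prod (S := ℂ) lexKey_injective
      (univ.filter (fun i => i < j))
      (fun i => (MvPolynomial.X i - MvPolynomial.X j) ^ (r - (a j - a i)))
      (fun i => Finsupp.single j (r - (a j - a i)))
      (fun i hi => (vanishBelow_X_sub_X_pow (by simpa using hi) _).1) lexKey_nonneg
    have hbd := eq_of_vanishBelow lexKey_injective hb hb0 (hQ ▸ h1.mul hd) (by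
      rw [hQ, h1.coeff_mul lexKey_injective hd, h2]
      refine mul_ne_zero (Finset.prod_ne_zero_iff.2 fun i hi => ?_) hd0
      rw [(vanishBelow_X_sub_X_pow (by simpa using hi) _).2]
      exact pow_ne_zero _ (by norm_num))
    rw [hbd]
    simp

end Necessity


/-! ### Every `r`-lexicographically increasing vector is attained -/

section Sufficiency

variable {n : ℕ}

/-- Permuting a monotone sequence cannot make it lexicographically smaller. -/
theorem le_apply_perm_of_agree {L : Type*} [LinearOrder L] {P : Fin n → L} (hP : Monotone P)
    (σ : Equiv.Perm (Fin n)) {i : Fin n} (h : ∀ j < i, P (σ j) = P j) : P i ≤ P (σ i) := by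
  by_contra! hlt
  -- `σ` would map `insert i T` injectively into the smaller set `T`.
  let T := univ.filter fun j => P j ≤ P (σ i)
  have hi : i ∉ T := by simpa [T] using hlt
  have hmap : ∀ j ∈ insert i T, σ j ∈ T := by
    intro j hj
    rcases mem_insert.1 hj with rfl | hj
    · simp [T]
    · have hj' : P j ≤ P (σ i) := by simpa [T] using hj
      have hji : j < i := hP.reflect_lt (hj'.trans_lt hlt)
      simpa [T, h j hji] using hj'
  have := card_le_card_of_injOn σ hmap σ.injective.injOn
  rw [card_insert_of_notMem hi] at this
  omega

/-- The exponent vector of `x^A y^B`. -/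
def pairExp (A B : Fin n → ℕ) : Fin n ⊕ Fin n →₀ ℕ :=
  Finsupp.equivFunOnFinite.symm (Sum.elim A B)

theorem pairExp_inl (A B : Fin n → ℕ) (i : Fin n) : pairExp A B (Sum.inl i) = A i := rfl

theorem pairExp_inr (A B : Fin n → ℕ) (i : Fin n) : pairExp A B (Sum.inr i) = B i := rfl

/-- The alternating polynomial `det (x_i^{A_j} y_i^{B_j})`, expanded over permutations. -/
def alternant (A B : Fin n → ℕ) : PolyRing n :=
  ∑ σ : Equiv.Perm (Fin n),
    ((Equiv.Perm.sign σ : ℤ) : ℂ) • MvPolynomial.monomial (pairExp (A ∘ σ) (B ∘ σ)) 1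

theorem isAlternating_alternant (A B : Fin n → ℕ) : IsAlternating n (alternant A B) := by
  intro τ
  unfold alternant
  rw [map_sum, Finset.smul_sum, ← Equiv.sum_comp (Equiv.mulRight τ)]
  refine Finset.sum_congr rfl fun σ _ => ?_
  rw [map_smul, MvPolynomial.rename_monomial, smul_smul]
  have h1 : (pairExp (A ∘ ⇑(σ * τ)) (B ∘ ⇑(σ * τ))).mapDomain (Equiv.sumCongr τ τ)
      = pairExp (A ∘ σ) (B ∘ σ) := by
    ext w
    rw [Finsupp.mapDomain_equiv_apply]
    rcases w with k | k <;> simp [pairExp]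
  simp only [Equiv.coe_mulRight]
  rw [h1]
  congr 1
  simp [mul_comm]

theorem alternant_trailing {A B : Fin n → ℕ} (hA : Monotone A)
    (hP : StrictMono fun i => toLex (A i, B i)) :
    VanishBelow (pairKey n) (alternant A B) (pairExp A B) ∧
      (alternant A B).coeff (pairExp A B) = 1 := by
  classical
  have hcoeff : ∀ e, (alternant A B).coeff e = ∑ σ : Equiv.Perm (Fin n),
      ((Equiv.Perm.sign σ : ℤ) : ℂ) * if pairExp (A ∘ σ) (B ∘ σ) = e then 1 else 0 := by
    intro e
    simp only [alternant, MvPolynomial.coeff_sum, MvPolynomial.coeff_smul,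
      MvPolynomial.coeff_monomial, smul_eq_mul]
  constructor
  · intro e he
    rw [hcoeff]
    refine Finset.sum_eq_zero fun σ _ => ?_
    rw [if_neg, mul_zero]
    rintro rfl
    rcases pairKey_lt.1 he with h | ⟨h1, h2⟩
    · obtain ⟨i, hj, hi⟩ := lexKey_lt.1 h
      exact absurd (le_apply_perm_of_agree hA σ (i := i) hj) (not_le.2 hi)
    · obtain ⟨i, hj, hi⟩ := lexKey_lt.1 h2
      have hAσ : ∀ k, A (σ k) = A k := fun k => DFunLike.congr_fun h1 k
      have hj' : ∀ j < i, B (σ j) = B j := hj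
      have hi' : B (σ i) < B i := hi
      have h3 := le_apply_perm_of_agree hP.monotone σ (i := i) fun j hji => by
        simp only [hAσ j, hj' j hji]
      rw [Prod.Lex.toLex_le_toLex] at h3
      rcases h3 with h3 | h3
      · exact absurd h3 (by simp [hAσ i])
      · exact absurd h3.2 (not_le.2 hi')
  · rw [hcoeff, Finset.sum_eq_single (1 : Equiv.Perm (Fin n))]
    · simp
    · intro σ _ hσ
      rw [if_neg, mul_zero]
      intro h
      refine hσ (Equiv.ext fun k => hP.injective ?_)
      have h1 : A (σ k) = A k := DFunLike.congr_fun h (Sum.inl k)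
      have h2 : B (σ k) = B k := DFunLike.congr_fun h (Sum.inr k)
      simp [h1, h2]
    · simp

/-- Hermite's identity. -/
theorem sum_add_div {r : ℕ} (hr : 1 ≤ r) (m : ℕ) : ∑ k ∈ range r, (m + k) / r = m := by
  induction m with
  | zero =>
    refine Finset.sum_eq_zero fun k hk => ?_
    rw [zero_add]
    exact Nat.div_eq_of_lt (mem_range.1 hk)
  | succ m ih =>
    have h1 := Finset.sum_range_succ (fun k => (m + k) / r) r
    rw [Finset.sum_range_succ', ih, Nat.add_div_right _ hr] at h1
    have h2 : ∑ k ∈ range r, (m + 1 + k) / r = ∑ k ∈ range r, (m + (k + 1)) / r :=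
      Finset.sum_congr rfl fun k _ => by rw [add_assoc, add_comm 1 k]
    simp only [add_zero] at h1
    omega

theorem sum_div_jump {r : ℕ} (hr : 1 ≤ r) (m : ℕ) :
    ∑ k ∈ range r, ((m + k + 1) / r - (m + k) / r) = 1 := by
  have h : ∑ k ∈ range r, ((m + k + 1) / r - (m + k) / r) + ∑ k ∈ range r, (m + k) / r
      = ∑ k ∈ range r, (m + 1 + k) / r := by
    rw [← Finset.sum_add_distrib]
    refine Finset.sum_congr rfl fun k _ => ?_
    rw [Nat.sub_add_cancel (Nat.div_le_div_right (Nat.le_succ _)), add_right_comm]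
  rw [sum_add_div hr, sum_add_div hr] at h
  omega

theorem sum_eq_count {r : ℕ} (hr : 1 ≤ r) {l m : ℕ} (hlm : l ≤ m) :
    ∑ k ∈ range r, (if (l + k) / r = (m + k) / r then 1 else 0) = r - (m - l) := by
  rcases le_or_gt r (m - l) with h | h
  · rw [Nat.sub_eq_zero_of_le h]
    refine Finset.sum_eq_zero fun k _ => if_neg (ne_of_lt ?_)
    calc (l + k) / r < (l + k) / r + 1 := Nat.lt_succ_self _
      _ = (l + k + r) / r := (Nat.add_div_right _ hr).symm
      _ ≤ (m + k) / r := Nat.div_le_div_right (by omega)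
  · have h1 : ∑ k ∈ range r, ((if (l + k) / r = (m + k) / r then 1 else 0) + (m + k) / r)
        = ∑ k ∈ range r, (1 + (l + k) / r) := by
      refine Finset.sum_congr rfl fun k _ => ?_
      have h2 : (l + k) / r ≤ (m + k) / r := Nat.div_le_div_right (by omega)
      have h3 : (m + k) / r ≤ (l + k) / r + 1 := by
        rw [← Nat.add_div_right _ hr]; exact Nat.div_le_div_right (by omega)
      split_ifs <;> omega
    rw [Finset.sum_add_distrib, Finset.sum_add_distrib, sum_add_div hr, sum_add_div hr] at h1
    simp only [Finset.sum_const, card_range, smul_eq_mul, mul_one] at h1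
    omega

theorem strictMono_of_adjacent {L : Type*} [Preorder L] {P : Fin n → L}
    (h : ∀ i : Fin n, ∀ hi : (i : ℕ) + 1 < n, P i < P ⟨(i : ℕ) + 1, hi⟩) : StrictMono P := by
  cases n with
  | zero => exact fun i => i.elim0
  | succ n =>
    rw [Fin.strictMono_iff_lt_succ]
    intro i
    exact h i.castSucc (by simp)

/-- The product of the `r` alternants with exponents `A k`, `B k` has trailing exponent `(a, b)`. -/
theorem sufficiency {r : ℕ} (hr : 1 ≤ r) {a b : Fin n → ℕ} (ha : Monotone a)
    (hab : ∀ i : Fin n, ∀ h : (i : ℕ) + 1 < n,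
      a i = a ⟨(i : ℕ) + 1, h⟩ → b i + r ≤ b ⟨(i : ℕ) + 1, h⟩)
    (hb : ∀ j : Fin n, ∑ i ∈ univ.filter (fun i => i < j), (r - (a j - a i)) ≤ b j) :
    ∃ f ∈ Ar n r, VanishBelow (pairKey n) f (pairExp a b) ∧ f.coeff (pairExp a b) ≠ 0 := by
  classical
  -- the minimal admissible `y`-exponents and the excess over them
  let M : Fin n → ℕ := fun j => ∑ i ∈ univ.filter (fun i => i < j), (r - (a j - a i))
  let c : Fin n → ℕ := fun j => b j - M j
  let A : ℕ → Fin n → ℕ := fun k j => (a j + k) / r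
  let N : ℕ → Fin n → ℕ := fun k j =>
    ∑ i ∈ univ.filter (fun i => i < j), if A k i = A k j then 1 else 0
  -- `D k j` is `1` for the single `k` such that `a j` is the largest `m` with a given value of
  -- `(m + k) / r`, and `0` otherwise
  let D : ℕ → Fin n → ℕ := fun k j => (a j + k + 1) / r - (a j + k) / r
  let B : ℕ → Fin n → ℕ := fun k j => N k j + D k j * c j
  have hA : ∀ k, Monotone (A k) := fun k i j hij =>
    Nat.div_le_div_right (Nat.add_le_add_right (ha hij) k)
  have hfilter : ∀ (i : Fin n) (h : (i : ℕ) + 1 < n),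
      univ.filter (fun l : Fin n => l < ⟨(i : ℕ) + 1, h⟩)
        = insert i (univ.filter fun l : Fin n => l < i) := by
    intro i h
    ext l
    simp only [mem_filter, mem_univ, true_and, mem_insert, Fin.lt_def, Fin.ext_iff]
    omega
  have hP : ∀ k, StrictMono fun i => toLex (A k i, B k i) := by
    intro k
    refine strictMono_of_adjacent fun i h => ?_
    set j : Fin n := ⟨(i : ℕ) + 1, h⟩ with hj
    have hij : i < j := by simp [hj, Fin.lt_def]
    rw [Prod.Lex.toLex_lt_toLex]
    rcases (hA k hij.le).lt_or_eq with hlt | heq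
    · exact Or.inl hlt
    refine Or.inr ⟨heq, ?_⟩
    have hN : N k j = N k i + 1 := by
      simp only [N]
      rw [hj, hfilter i h, ← hj, sum_insert (by simp), if_pos heq, heq, add_comm]
    have hD : D k i * c i ≤ D k j * c j := by
      rcases (ha hij.le).lt_or_eq with hlt | haeq
      · have h0 : D k i = 0 := by
          refine Nat.sub_eq_zero_of_le ?_
          calc (a i + k + 1) / r ≤ (a j + k) / r := Nat.div_le_div_right (by omega)
            _ = (a i + k) / r := heq.symm
        simp [h0]
      · have hMj : M j = M i + r := by
          simp only [M]
          rw [hj, hfilter i h, ← hj, sum_insert (by simp), haeq]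
          omega
        have h1 : b i + r ≤ b j := hab i h haeq
        have hc : c i ≤ c j := by
          simp only [c, hMj]
          omega
        have hDD : D k i = D k j := by simp only [D, haeq]
        rw [hDD]
        exact Nat.mul_le_mul_left _ hc
    show N k i + D k i * c i < N k j + D k j * c j
    omega
  have hsum : ∑ k ∈ range r, pairExp (A k) (B k) = pairExp a b := by
    ext w
    rw [Finsupp.finsetSum_apply]
    rcases w with j | j
    · simp only [pairExp_inl]
      exact sum_add_div hr (a j)
    · simp only [pairExp_inr, B, sum_add_distrib, ← Finset.sum_mul]
      have h1 : ∑ k ∈ range r, N k j = M j := by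
        simp only [N, M]
        rw [Finset.sum_comm]
        refine Finset.sum_congr rfl fun i hi => ?_
        exact sum_eq_count hr (ha (le_of_lt (by simpa using hi)))
      have h2 : ∑ k ∈ range r, D k j = 1 := sum_div_jump hr (a j)
      rw [h1, h2, one_mul]
      exact Nat.add_sub_of_le (hb j)
  obtain ⟨h1, h2⟩ := VanishBelow.prod (S := ℂ) pairKey_injective (range r)
    (fun k => alternant (A k) (B k)) (fun k => pairExp (A k) (B k))
    (fun k _ => (alternant_trailing (hA k) (hP k)).1) pairKey_nonneg
  rw [hsum] at h1 h2
  refine ⟨_, Submodule.subset_span ⟨fun k : Fin r => alternant (A k) (B k),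
    fun k => isAlternating_alternant _ _, (Finset.prod_range _)⟩, h1, ?_⟩
  rw [h2]
  refine Finset.prod_ne_zero_iff.2 fun k _ => ?_
  rw [(alternant_trailing (hA k) (hP k)).2]
  exact one_ne_zero

theorem monLT_iff {d e : Fin n ⊕ Fin n →₀ ℕ} : MonLT n d e ↔ pairKey n d < pairKey n e := by
  rw [pairKey_lt, lexKey_lt, lexKey_lt]
  simp only [Finsupp.fst_sumFinsuppAddEquivProdFinsupp, Finsupp.snd_sumFinsuppAddEquivProdFinsupp]
  constructor
  · rintro ⟨v | v, hv, hw⟩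
    · exact Or.inl ⟨v, fun j hj => hw (Sum.inl j) hj, hv⟩
    · refine Or.inr ⟨?_, v, fun j hj => hw (Sum.inr j) ?_, hv⟩
      · ext j
        exact hw (Sum.inl j) (by simp only [varIdx]; omega)
      · simp only [varIdx]; omega
  · rintro (⟨i, hj, hi⟩ | ⟨h, i, hj, hi⟩)
    · refine ⟨Sum.inl i, hi, ?_⟩
      rintro (w | w) hw
      · exact hj w hw
      · simp only [varIdx] at hw; omega
    · refine ⟨Sum.inr i, hi, ?_⟩
      rintro (w | w) hw
      · exact DFunLike.congr_fun h w
      · exact hj w (by simp only [varIdx] at hw; omega)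

theorem isTrailingExp_iff {f : PolyRing n} {d : Fin n ⊕ Fin n →₀ ℕ} :
    IsTrailingExp n f d ↔ VanishBelow (pairKey n) f d ∧ f.coeff d ≠ 0 := by
  constructor
  · rintro ⟨-, hd, hmin⟩
    refine ⟨fun e he => ?_, MvPolynomial.mem_support_iff.1 hd⟩
    by_contra h
    have hne : e ≠ d := by rintro rfl; exact lt_irrefl _ he
    exact lt_asymm he (monLT_iff.1 (hmin e (MvPolynomial.mem_support_iff.2 h) hne))
  · rintro ⟨hv, hd⟩
    refine ⟨?_, MvPolynomial.mem_support_iff.2 hd, fun e he hne => monLT_iff.2 ?_⟩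
    · rintro rfl; simp at hd
    · rcases lt_trichotomy (pairKey n d) (pairKey n e) with h | h | h
      · exact h
      · exact absurd (pairKey_injective h).symm hne
      · exact absurd (hv e h) (MvPolynomial.mem_support_iff.1 he)

theorem vanishBelow_iterated {f : PolyRing n} {a b : Fin n →₀ ℕ}
    (h : VanishBelow (pairKey n) f (Finsupp.sumFinsuppAddEquivProdFinsupp.symm (a, b))) :
    VanishBelow (lexKey n) (MvPolynomial.sumAlgEquiv ℂ (Fin n) (Fin n) f) a ∧
      VanishBelow (lexKey n) ((MvPolynomial.sumAlgEquiv ℂ (Fin n) (Fin n) f).coeff a) b := by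
  constructor
  · intro c hc
    ext d
    rw [coeff_coeff_sumAlgEquiv, MvPolynomial.coeff_zero]
    refine h _ (pairKey_lt.2 (Or.inl ?_))
    simpa only [AddEquiv.apply_symm_apply] using hc
  · intro d hd
    rw [coeff_coeff_sumAlgEquiv]
    refine h _ (pairKey_lt.2 (Or.inr ?_))
    simpa only [AddEquiv.apply_symm_apply, true_and] using hd

end Sufficiency

/-- Theorem 3.1 of the paper: `(a_1,…,a_n,b_1,…,b_n) ∈ ℤ^{2n}_{≥0}` is
the trailing exponent of some nonzero `f ∈ A^r` iff `(a_1,b_1,…,a_n,b_n)` is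
`r`-lexicographically increasing in `ℤ²_{≥0}`. -/
theorem trailing_exponents_of_Ar (n : ℕ) (hn : 1 ≤ n) (r : ℕ) (hr : 1 ≤ r)
    (a b : Fin n → ℕ) :
    (∃ f ∈ Ar n r,
        IsTrailingExp n f (Finsupp.equivFunOnFinite.symm (Sum.elim a b))) ↔
      RLexNN n (r : ℤ) (fun j => ((a j : ℕ) : ℤ)) (fun j => ((b j : ℕ) : ℤ)) := by
  -- `pairExp a b` unfolds to the exponent in the statement
  change (∃ f ∈ Ar n r, IsTrailingExp n f (pairExp a b)) ↔ _
  have hmax : ∀ j i : Fin n, i < j → Monotone a →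
      max ((r : ℤ) - ((a j : ℤ) - (a i : ℤ))) 0 = ((r - (a j - a i) : ℕ) : ℤ) := by
    intro j i hij ha
    have := ha hij.le
    omega
  have hsum : ∀ j : Fin n, Monotone a →
      (∑ i ∈ univ.filter (fun i => i < j), max ((r : ℤ) - ((a j : ℤ) - (a i : ℤ))) 0)
        = ((∑ i ∈ univ.filter (fun i => i < j), (r - (a j - a i)) : ℕ) : ℤ) := by
    intro j ha
    rw [Nat.cast_sum]
    exact Finset.sum_congr rfl fun i hi => hmax j i (by simpa using hi) ha
  simp only [isTrailingExp_iff]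
  constructor
  · rintro ⟨f, hf, hv, h0⟩
    have hpair : pairExp a b = Finsupp.sumFinsuppAddEquivProdFinsupp.symm
        (Finsupp.equivFunOnFinite.symm a, Finsupp.equivFunOnFinite.symm b) := by
      ext w
      rcases w with j | j <;> simp [pairExp]
    rw [hpair] at hv h0
    obtain ⟨h1, h2⟩ := vanishBelow_iterated hv
    rw [← coeff_coeff_sumAlgEquiv] at h0
    obtain ⟨hm, ht, hs⟩ := necessity hf h1 h2 h0
    simp only [Finsupp.equivFunOnFinite_symm_apply_apply] at hm ht hs
    have ha : Monotone a := fun i j hij => by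
      rcases hij.lt_or_eq with h | h
      · exact hm i j h
      · rw [h]
    refine ⟨fun _ => Int.natCast_nonneg _, fun i j hij => Int.ofNat_le.2 (ha hij),
      fun i h heq => ?_, fun j => ?_⟩
    · have h3 := ht i ⟨i + 1, h⟩ (by simp [Fin.lt_def]) (Int.ofNat_inj.1 heq)
      beta_reduce
      exact_mod_cast h3
    · beta_reduce
      rw [hsum j ha]
      exact_mod_cast hs j
  · rintro ⟨-, hm, ht, hs⟩
    have ha : Monotone a := fun i j hij => Int.ofNat_le.1 (hm hij)
    refine sufficiency hr ha (fun i h heq => ?_) fun j => ?_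
    · have h3 := ht i h (congrArg Nat.cast heq)
      beta_reduce at h3
      exact_mod_cast h3
    · have h3 := hs j
      beta_reduce at h3
      rw [hsum j ha] at h3
      exact_mod_cast h3

end
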